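/- arXiv:1206.4132 — 2 statements merged into one kernel-verified Lean document; each statement's English description precedes it below -/
import Mathlib

section
/- There exists a C^∞-smooth real hypersurface germ M = {(z₁,z₂) ∈ ℂ² : ρ(z₁,z₂) = Re z₁ + f(z₂) = 0} at the origin in ℂ², with f: ℂ → ℝ a C^∞-smooth function with f(0)=0, such that the D'Angelo type τ(M,0) = +∞, and yet there exists NO regular holomorphic curve with infinite order contact with M at 0; that is, there is no function h holomorphic in a neighborhood of 0 in ℂ with h(0)=0 such that the curve φ(t) = (h(t), t) satisfies ν(ρ∘φ) = +∞. -/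
/-!
Give `f` the Taylor series at `0` of the real part of a power series `∑ aₙ zⁿ` with zero radius of
convergence. The curves `t ↦ (-∑_{n ≤ ℓ} aₙ tⁿ, t)` have order of contact more than `ℓ` with `M`,
so the type is infinite. If `t ↦ (h(t), t)` had infinite order of contact, then `-Re h` would have
the Taylor series `Re ∑ aₙ zⁿ`, and the Taylor coefficients of the real-analytic function `-Re h`
grow at most geometrically, contradicting divergence.
-/

open Complex Metric Filter Topology Asymptotics

/-- The Wirtinger derivative ∂f/∂z = (1/2)(∂f/∂x - i ∂f/∂y) of a function f : ℂ → ℂ. -/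
noncomputable def wirtinger (f : ℂ → ℂ) (z : ℂ) : ℂ :=
  (1 / 2) * (fderiv ℝ f z 1 - Complex.I * fderiv ℝ f z Complex.I)

/-- The Wirtinger derivative of a real-valued function on ℂ. -/
noncomputable def wirtingerR (f : ℂ → ℝ) (z : ℂ) : ℂ :=
  wirtinger (fun w => (f w : ℂ)) z

/-- Iterated Wirtinger derivative ∂^N/∂z^N. -/
noncomputable def wirtingerIter : ℕ → (ℂ → ℂ) → (ℂ → ℂ)
  | 0, f => f
  | n + 1, f => wirtinger (wirtingerIter n f)

/-- The Wirtinger derivative of ρ : ℂ × ℂ → ℝ in the first variable. -/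
noncomputable def wirtinger1 (ρ : ℂ × ℂ → ℝ) (z : ℂ × ℂ) : ℂ :=
  wirtinger (fun w => (ρ (w, z.2) : ℂ)) z.1

/-- The Wirtinger derivative of ρ : ℂ × ℂ → ℝ in the second variable. -/
noncomputable def wirtinger2 (ρ : ℂ × ℂ → ℝ) (z : ℂ × ℂ) : ℂ :=
  wirtinger (fun w => (ρ (z.1, w) : ℂ)) z.2

/-- The vanishing order ν(f) of a smooth function at 0: the least n such that the n-th
derivative of f at 0 is nonzero, and +∞ if all derivatives vanish at 0. -/
noncomputable def vanishOrder {E : Type*} [NormedAddCommGroup E] [NormedSpace ℝ E]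
    (f : ℂ → E) : ℕ∞ :=
  sInf {m : ℕ∞ | ∃ n : ℕ, m = (n : ℕ∞) ∧ iteratedFDeriv ℝ n f 0 ≠ 0}

/-- The origin is a point of D'Angelo infinite type for the hypersurface {ρ = 0}:
for every ℓ > 0 there is a holomorphic disc h through 0 with ν(h) finite and
ν(ρ ∘ h) / ν(h) > ℓ. -/
def IsInfiniteType (ρ : ℂ × ℂ → ℝ) : Prop :=
  ∀ ℓ : ℕ, 0 < ℓ → ∃ h : ℂ → ℂ × ℂ,
    DifferentiableOn ℂ h (Metric.ball 0 1) ∧ h 0 = 0 ∧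
    vanishOrder h ≠ ⊤ ∧ (ℓ : ℕ∞) * vanishOrder h < vanishOrder (fun t => ρ (h t))

open scoped ContDiff Nat

section Homogeneous

variable {𝕜 E F : Type*} [NontriviallyNormedField 𝕜] [NormedAddCommGroup E] [NormedSpace 𝕜 E]
  [NormedAddCommGroup F] [NormedSpace 𝕜 F] {p : E → F} {m n : ℕ}

lemma iteratedFDeriv_zero_eq_zero_of_homogeneous [CharZero 𝕜] (hp : ContDiff 𝕜 m p)
    (hom : ∀ (c : 𝕜) (x : E), p (c • x) = c ^ n • p x) (hmn : m ≠ n) :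
    iteratedFDeriv 𝕜 m p 0 = 0 := by
  have hscale : (2 : 𝕜) ^ m • iteratedFDeriv 𝕜 m p 0 = (2 : 𝕜) ^ n • iteratedFDeriv 𝕜 m p 0 := by
    have h := congrFun (iteratedFDeriv_comp_const_smul (2 : 𝕜) hp) 0
    simp only [hom, smul_zero] at h
    rw [← h, iteratedFDeriv_const_smul_apply' hp.contDiffAt]
  have hpow : (2 : 𝕜) ^ m ≠ 2 ^ n := by
    exact_mod_cast (Nat.pow_right_injective le_rfl).ne hmn
  rw [← sub_eq_zero, ← sub_smul, smul_eq_zero] at hscale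
  exact hscale.resolve_left (sub_ne_zero.2 hpow)

lemma iteratedFDeriv_zero_apply_const_of_homogeneous (hp : ContDiff 𝕜 n p)
    (hom : ∀ (c : 𝕜) (x : E), p (c • x) = c ^ n • p x) (y : E) :
    iteratedFDeriv 𝕜 n p 0 (fun _ => y) = (n ! : 𝕜) • p y := by
  have hline := ((1 : 𝕜 →L[𝕜] 𝕜).smulRight y).iteratedFDeriv_comp_right hp 0 le_rfl
  have hcomp : p ∘ (1 : 𝕜 →L[𝕜] 𝕜).smulRight y = fun t => t ^ n • p y := by
    funext t
    simp [hom]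
  calc iteratedFDeriv 𝕜 n p 0 (fun _ => y)
      = iteratedDeriv n (fun t : 𝕜 => t ^ n • p y) 0 := by
        rw [iteratedDeriv_eq_iteratedFDeriv, ← hcomp, hline]
        simp [ContinuousMultilinearMap.compContinuousLinearMap_apply]
    _ = (n ! : 𝕜) • p y := by
        rw [iteratedDeriv_smul_const (by fun_prop), iteratedDeriv_fun_pow_zero, if_pos rfl]

end Homogeneous

section Borel

variable {E F : Type*} [NormedAddCommGroup E] [NormedSpace ℝ E] [NormedAddCommGroup F]
  [NormedSpace ℝ F]

lemma exists_norm_iteratedFDeriv_le_of_hasCompactSupport {g : E → F} {k : ℕ}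
    (hg : ContDiff ℝ k g) (hgc : HasCompactSupport g) :
    ∃ C, ∀ x, ‖iteratedFDeriv ℝ k g x‖ ≤ C :=
  (hg.continuous_iteratedFDeriv le_rfl).bounded_above_of_compact_support (hgc.iteratedFDeriv k)

lemma norm_iteratedFDeriv_inv_pow_smul_comp_smul_le {q : E → F} {k : ℕ} (hq : ContDiff ℝ k q)
    {C : ℝ} (hC : ∀ x, ‖iteratedFDeriv ℝ k q x‖ ≤ C) (n : ℕ) {L : ℝ} (hL : 0 < L) (x : E) :
    ‖iteratedFDeriv ℝ k (fun x => (L ^ n)⁻¹ • q (L • x)) x‖ ≤ L ^ k / L ^ n * C := by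
  have hqL : ContDiff ℝ k (fun x => q (L • x)) := hq.comp (contDiff_const_smul L)
  rw [iteratedFDeriv_const_smul_apply' hqL.contDiffAt, iteratedFDeriv_comp_const_smul L hq,
    smul_smul, norm_smul, ← div_eq_inv_mul, Real.norm_of_nonneg (by positivity)]
  gcongr
  exact hC _

variable [FiniteDimensional ℝ E]

/-- If `χ` is a bump function, the truncation `L⁻ⁿ (χ p)(L x)` equals `p` near `0` by homogeneity,
and its `k`-th derivative is of size `L ^ (k - n)`, small for large `L` when `k < n`. -/
lemma exists_hasCompactSupport_eventuallyEq_of_homogeneous {p : E → F} {n : ℕ}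
    (hp : ContDiff ℝ ∞ p) (hom : ∀ (c : ℝ) (x : E), p (c • x) = c ^ n • p x)
    {ε : ℝ} (hε : 0 < ε) :
    ∃ g : E → F, ContDiff ℝ ∞ g ∧ HasCompactSupport g ∧ g =ᶠ[𝓝 0] p ∧
      ∀ k < n, ∀ x, ‖iteratedFDeriv ℝ k g x‖ ≤ ε := by
  let χ : ContDiffBump (0 : E) := default
  let q : E → F := fun x => χ x • p x
  have hq : ContDiff ℝ ∞ q := χ.contDiff.smul hp
  have hqc : HasCompactSupport q := χ.hasCompactSupport.smul_right
  have hqk (k : ℕ) : ContDiff ℝ k q := hq.of_le (mod_cast le_top)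
  choose C hC using fun k => exists_norm_iteratedFDeriv_le_of_hasCompactSupport (hqk k) hqc
  have hsmall : ∀ᶠ L : ℝ in atTop, ∀ k ∈ Finset.range n, L ^ k / L ^ n * C k ≤ ε := by
    refine (Finset.eventually_all _).2 fun k hk => ?_
    have hlim : Tendsto (fun L : ℝ => L ^ k / L ^ n * C k) atTop (𝓝 0) := by
      simpa using (tendsto_pow_div_pow_atTop_zero (Finset.mem_range.1 hk)).mul_const (C k)
    exact hlim.eventually_le_const hε
  obtain ⟨L, hLε, hL⟩ := (hsmall.and (eventually_gt_atTop 0)).exists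
  refine ⟨fun x => (L ^ n)⁻¹ • q (L • x), contDiff_const.smul (hq.comp (contDiff_const_smul L)),
    (hqc.comp_smul hL.ne').smul_left, ?_, fun k hk x =>
      (norm_iteratedFDeriv_inv_pow_smul_comp_smul_le (hqk k) (hC k) n hL x).trans
        (hLε k (Finset.mem_range.2 hk))⟩
  have hdilate : Tendsto (fun x : E => L • x) (𝓝 0) (𝓝 0) :=
    (continuous_const_smul L).tendsto' 0 0 (smul_zero L)
  filter_upwards [hdilate.eventually χ.eventuallyEq_one] with x (hx : χ (L • x) = 1)
  simp only [q, hx, hom, one_smul, inv_smul_smul₀ (pow_ne_zero n hL.ne')]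

/-- **Borel's lemma**, with the prescribed Taylor series given by its homogeneous parts. -/
theorem exists_contDiff_iteratedFDeriv_zero_eq [CompleteSpace F] {p : ℕ → E → F}
    (hp : ∀ n, ContDiff ℝ ∞ (p n)) (hom : ∀ n (c : ℝ) (x : E), p n (c • x) = c ^ n • p n x) :
    ∃ f : E → F, ContDiff ℝ ∞ f ∧ ∀ m, iteratedFDeriv ℝ m f 0 = iteratedFDeriv ℝ m (p m) 0 := by
  choose g hg hgc hgp hgε using fun n =>
    exists_hasCompactSupport_eventuallyEq_of_homogeneous (hp n) (hom n)
      (show (0 : ℝ) < (1 / 2) ^ n by positivity)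
  choose C hC using fun n k =>
    exists_norm_iteratedFDeriv_le_of_hasCompactSupport (k := k)
      ((hg n).of_le (mod_cast le_top)) (hgc n)
  let v : ℕ → ℕ → ℝ := fun k n => if k < n then (1 / 2) ^ n else C n k
  have hv (k : ℕ) : Summable (v k) := by
    refine (summable_congr_atTop ?_).1 summable_geometric_two
    filter_upwards [eventually_gt_atTop k] with n hn using (if_pos hn).symm
  have hgv (k n : ℕ) (x : E) : ‖iteratedFDeriv ℝ k (g n) x‖ ≤ v k n := by
    by_cases hkn : k < n
    · simpa only [v, if_pos hkn] using hgε n k hkn x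
    · simpa only [v, if_neg hkn] using hC n k x
  refine ⟨fun x => ∑' n, g n x,
    contDiff_tsum hg (fun k _ => hv k) fun k n x _ => hgv k n x, fun m => ?_⟩
  calc iteratedFDeriv ℝ m (fun x => ∑' n, g n x) 0
      = ∑' n, iteratedFDeriv ℝ m (g n) 0 :=
        iteratedFDeriv_tsum_apply hg (fun k _ => hv k) (fun k n x _ => hgv k n x) le_top 0
    _ = ∑' n, iteratedFDeriv ℝ m (p n) 0 :=
        tsum_congr fun n => ((hgp n).iteratedFDeriv ℝ m).eq_of_nhds
    _ = iteratedFDeriv ℝ m (p m) 0 := tsum_eq_single m fun n hnm =>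
        iteratedFDeriv_zero_eq_zero_of_homogeneous ((hp n).of_le (mod_cast le_top)) (hom n) hnm.symm

end Borel

section VanishOrder

variable {E : Type*} [NormedAddCommGroup E] [NormedSpace ℝ E] {f : ℂ → E} {n : ℕ}

lemma vanishOrder_le (h : iteratedFDeriv ℝ n f 0 ≠ 0) : vanishOrder f ≤ n :=
  sInf_le ⟨n, rfl, h⟩

lemma le_vanishOrder_iff :
    (n : ℕ∞) ≤ vanishOrder f ↔ ∀ m < n, iteratedFDeriv ℝ m f 0 = 0 := by
  simp only [vanishOrder, le_sInf_iff, Set.mem_ofPred_eq, forall_exists_index, and_imp]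
  refine ⟨fun h m hm => ?_, ?_⟩
  · by_contra hne
    exact hm.not_ge (mod_cast h m m rfl hne)
  · rintro h _ m rfl hne
    by_contra hlt
    exact hne (h m (not_le.1 (mod_cast hlt)))

lemma vanishOrder_eq_top_iff : vanishOrder f = ⊤ ↔ ∀ n, iteratedFDeriv ℝ n f 0 = 0 := by
  rw [ENat.eq_top_iff_forall_ge]
  simp only [le_vanishOrder_iff]
  exact ⟨fun h n => h (n + 1) n n.lt_succ_self, fun h _ m _ => h m⟩

lemma vanishOrder_prodMk_id_le_one (hf : DifferentiableAt ℝ f 0) :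
    vanishOrder (fun t => (f t, t)) ≤ 1 := by
  refine vanishOrder_le fun h => ?_
  have hd : HasFDerivAt (fun t : ℂ => (f t, t))
      ((fderiv ℝ f 0).prod (ContinuousLinearMap.id ℝ ℂ)) 0 :=
    hf.hasFDerivAt.prodMk (hasFDerivAt_id 0)
  have h₁ := congrArg (fun D => D fun _ => (1 : ℂ)) h
  simp only [iteratedFDeriv_one_apply, hd.fderiv] at h₁
  simpa using congrArg Prod.snd h₁

end VanishOrder

lemma exists_norm_iteratedFDeriv_apply_const_le_of_analyticAt {𝕜 E F : Type*}
    [NontriviallyNormedField 𝕜] [NormedAddCommGroup E] [NormedSpace 𝕜 E] [NormedAddCommGroup F]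
    [NormedSpace 𝕜 F] [CompleteSpace F] {u : E → F} {x : E} (hu : AnalyticAt 𝕜 u x) :
    ∃ C : ℝ, ∃ r : NNReal, 0 < r ∧ ∀ (m : ℕ) (y : E),
      ‖iteratedFDeriv 𝕜 m u x fun _ => y‖ * r ^ m ≤ ‖(m ! : 𝕜)‖ * C * ‖y‖ ^ m := by
  obtain ⟨p, R, hp⟩ := hu
  obtain ⟨r, hr, hrR⟩ := ENNReal.lt_iff_exists_nnreal_btwn.1 hp.radius_pos
  obtain ⟨C, -, hC⟩ := p.norm_mul_pow_le_of_lt_radius hrR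
  refine ⟨C, r, mod_cast hr, fun m y => ?_⟩
  rw [← hp.factorial_smul, ← Nat.cast_smul_eq_nsmul 𝕜, norm_smul]
  calc ‖(m ! : 𝕜)‖ * ‖p m fun _ => y‖ * r ^ m
      ≤ ‖(m ! : 𝕜)‖ * (‖p m‖ * ‖y‖ ^ m) * r ^ m := by
        gcongr
        simpa using (p m).le_opNorm fun _ => y
    _ = ‖(m ! : 𝕜)‖ * (‖p m‖ * r ^ m) * ‖y‖ ^ m := by ring
    _ ≤ ‖(m ! : 𝕜)‖ * C * ‖y‖ ^ m := by
        gcongr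
        exact hC m

/-- The real monomial `z ↦ Re (c zⁿ)`, a homogeneous part of the real part of a power series. -/
noncomputable def reMonomial (c : ℂ) (n : ℕ) (z : ℂ) : ℝ := (c * z ^ n).re

lemma contDiff_reMonomial (c : ℂ) (n : ℕ) {N : WithTop ℕ∞} : ContDiff ℝ N (reMonomial c n) :=
  Complex.reCLM.contDiff.comp (contDiff_const.mul (contDiff_id.pow n))

lemma reMonomial_smul (c : ℂ) (n : ℕ) (s : ℝ) (z : ℂ) :
    reMonomial c n (s • z) = s ^ n • reMonomial c n z := by
  simp only [reMonomial, smul_pow, mul_smul_comm, Complex.smul_re]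

lemma exists_norm_eq_one_reMonomial_eq_norm (c : ℂ) {n : ℕ} (hn : 0 < n) :
    ∃ z : ℂ, ‖z‖ = 1 ∧ reMonomial c n z = ‖c‖ := by
  obtain ⟨w, hw, hwc⟩ := RCLike.exists_norm_eq_mul_self c
  obtain ⟨z, rfl⟩ := IsAlgClosed.exists_pow_nat_eq w hn
  refine ⟨z, (pow_eq_one_iff_of_nonneg (norm_nonneg z) hn.ne').1 (by rwa [← norm_pow]), ?_⟩
  rw [reMonomial, mul_comm, ← hwc]
  exact Complex.ofReal_re _

/-- The function `f` has at `0` the Taylor series of the real part of the formal power series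
`∑ aₙ zⁿ`. No smoothness of `f` is included. -/
def HasReTaylorSeries (f : ℂ → ℝ) (a : ℕ → ℂ) : Prop :=
  ∀ m, iteratedFDeriv ℝ m f 0 = iteratedFDeriv ℝ m (reMonomial (a m) m) 0

lemma exists_contDiff_hasReTaylorSeries (a : ℕ → ℂ) :
    ∃ f : ℂ → ℝ, ContDiff ℝ ∞ f ∧ HasReTaylorSeries f a :=
  exists_contDiff_iteratedFDeriv_zero_eq (fun n => contDiff_reMonomial (a n) n)
    fun n => reMonomial_smul (a n) n

lemma iteratedFDeriv_zero_re_sum_range (a : ℕ → ℂ) {m N : ℕ} (hm : m < N) :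
    iteratedFDeriv ℝ m (fun z => (∑ n ∈ Finset.range N, a n * z ^ n).re) 0 =
      iteratedFDeriv ℝ m (reMonomial (a m) m) 0 := by
  have hsum : (fun z => (∑ n ∈ Finset.range N, a n * z ^ n).re) =
      fun z => ∑ n ∈ Finset.range N, reMonomial (a n) n z := by
    funext z
    simp only [reMonomial, Complex.re_sum]
  rw [hsum, iteratedFDeriv_fun_sum_apply fun n _ => (contDiff_reMonomial (a n) n).contDiffAt]
  exact Finset.sum_eq_single_of_mem m (Finset.mem_range.2 hm) fun n _ hnm =>
    iteratedFDeriv_zero_eq_zero_of_homogeneous (contDiff_reMonomial (a n) n)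
      (reMonomial_smul (a n) n) hnm.symm

namespace HasReTaylorSeries

variable {f : ℂ → ℝ} {a : ℕ → ℂ}

lemma apply_zero (ha : HasReTaylorSeries f a) : f 0 = (a 0).re := by
  simpa [reMonomial] using congrArg (fun D => D fun _ => (0 : ℂ)) (ha 0)

lemma iteratedFDeriv_apply_const (ha : HasReTaylorSeries f a) (m : ℕ) (y : ℂ) :
    iteratedFDeriv ℝ m f 0 (fun _ => y) = m ! * reMonomial (a m) m y := by
  rw [ha m, iteratedFDeriv_zero_apply_const_of_homogeneous (contDiff_reMonomial _ _)
    (reMonomial_smul _ _), smul_eq_mul]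

lemma le_vanishOrder_re_neg_sum_add (ha : HasReTaylorSeries f a) (hf : ContDiff ℝ ∞ f) (N : ℕ) :
    (N : ℕ∞) ≤ vanishOrder fun t =>
      (-∑ n ∈ Finset.range N, a n * t ^ n).re + f t := by
  refine le_vanishOrder_iff.2 fun m hm => ?_
  have hP : ContDiff ℝ m fun t : ℂ => (∑ n ∈ Finset.range N, a n * t ^ n).re :=
    Complex.reCLM.contDiff.comp (by fun_prop)
  simp only [Complex.neg_re, neg_add_eq_sub]
  rw [fun_iteratedFDeriv_sub_apply (hf.of_le (mod_cast le_top)).contDiffAt hP.contDiffAt,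
    iteratedFDeriv_zero_re_sum_range a hm, ha m, sub_self]

theorem isInfiniteType (ha : HasReTaylorSeries f a) (hf : ContDiff ℝ ∞ f) (ha₀ : a 0 = 0) :
    IsInfiniteType fun z : ℂ × ℂ => z.1.re + f z.2 := by
  intro ℓ _
  let P : ℂ → ℂ := fun t => -∑ n ∈ Finset.range (ℓ + 1), a n * t ^ n
  have hP : Differentiable ℂ P := by fun_prop
  have hP₀ : P 0 = 0 := by simp [P, Finset.sum_range_succ', ha₀]
  have hcurve : vanishOrder (fun t => (P t, t)) ≤ 1 :=
    vanishOrder_prodMk_id_le_one ((hP 0).restrictScalars ℝ)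
  refine ⟨fun t => (P t, t), (hP.prodMk differentiable_id).differentiableOn,
    Prod.mk_eq_zero.2 ⟨hP₀, rfl⟩, ne_top_of_le_ne_top ENat.one_ne_top hcurve, ?_⟩
  calc (ℓ : ℕ∞) * vanishOrder (fun t => (P t, t)) ≤ ℓ * 1 := by gcongr
    _ < (ℓ + 1 : ℕ) := by simpa only [mul_one] using mod_cast ℓ.lt_succ_self
    _ ≤ vanishOrder fun t => (P t).re + f t := ha.le_vanishOrder_re_neg_sum_add hf (ℓ + 1)

theorem radius_pos_of_analyticAt (ha : HasReTaylorSeries f a) (hf : AnalyticAt ℝ f 0) :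
    0 < (FormalMultilinearSeries.ofScalars ℂ a).radius := by
  obtain ⟨C, r, hr, hC⟩ := exists_norm_iteratedFDeriv_apply_const_le_of_analyticAt hf
  refine (ENNReal.coe_pos.2 hr).trans_le
    (FormalMultilinearSeries.le_radius_of_eventually_le _ C ?_)
  filter_upwards [eventually_gt_atTop 0] with m hm
  obtain ⟨y, hy, hay⟩ := exists_norm_eq_one_reMonomial_eq_norm (a m) hm
  have hbound := hC m y
  rw [ha.iteratedFDeriv_apply_const, hay, hy, norm_mul, norm_norm, Real.norm_natCast, one_pow,
    mul_one, mul_assoc] at hbound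
  rw [FormalMultilinearSeries.ofScalars_norm]
  exact le_of_mul_le_mul_left hbound (by positivity)

theorem radius_pos_of_vanishOrder_eq_top (ha : HasReTaylorSeries f a) (hf : ContDiff ℝ ∞ f)
    {h : ℂ → ℂ} (hh : AnalyticAt ℂ h 0) (htop : vanishOrder (fun t => (h t).re + f t) = ⊤) :
    0 < (FormalMultilinearSeries.ofScalars ℂ a).radius := by
  have hre : AnalyticAt ℝ (fun t => (h t).re) 0 :=
    (Complex.reCLM.analyticAt _).comp hh.restrictScalars
  have hneg : HasReTaylorSeries (fun t => -(h t).re) a := fun m => by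
    have hm := vanishOrder_eq_top_iff.1 htop m
    rw [fun_iteratedFDeriv_add_apply hre.contDiffAt (hf.of_le (mod_cast le_top)).contDiffAt,
      ha m] at hm
    calc iteratedFDeriv ℝ m (fun t => -(h t).re) 0
        = -iteratedFDeriv ℝ m (fun t => (h t).re) 0 := iteratedFDeriv_neg_apply
      _ = iteratedFDeriv ℝ m (reMonomial (a m) m) 0 := (eq_neg_of_add_eq_zero_right hm).symm
  exact hneg.radius_pos_of_analyticAt hre.neg

end HasReTaylorSeries

lemma radius_ofScalars_natCast_mul_factorial (𝕜 : Type*) [RCLike 𝕜] :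
    (FormalMultilinearSeries.ofScalars 𝕜 fun n => (n * n ! : 𝕜)).radius = 0 := by
  refine FormalMultilinearSeries.ofScalars_radius_eq_zero_of_tendsto 𝕜 _ ?_
  suffices hratio : ∀ᶠ n : ℕ in atTop,
      (n : ℝ) ≤ ‖((n + 1 : ℕ) * (n + 1)! : 𝕜)‖ / ‖(n * n ! : 𝕜)‖ from
    tendsto_atTop_mono' _ hratio tendsto_natCast_atTop_atTop
  filter_upwards [eventually_gt_atTop 0] with n hn
  simp only [norm_mul, RCLike.norm_natCast, Nat.factorial_succ]
  rw [le_div_iff₀ (by positivity)]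
  norm_cast
  gcongr <;> exact n.le_succ

/-- **Example (Kim–Ninh).** There exists a C^∞-smooth hypersurface germ
M = {Re z₁ + f(z₂) = 0} at 0 in ℂ² with τ(M,0) = +∞ which admits no regular holomorphic
curve t ↦ (h(t), t) having infinite order contact with M at 0. -/
theorem statement4 :
    ∃ f : ℂ → ℝ, ContDiff ℝ (⊤ : ℕ∞) f ∧ f 0 = 0 ∧
      IsInfiniteType (fun z : ℂ × ℂ => z.1.re + f z.2) ∧
      ¬ (∃ (h : ℂ → ℂ) (ε : ℝ), 0 < ε ∧ DifferentiableOn ℂ h (Metric.ball 0 ε) ∧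
          h 0 = 0 ∧ vanishOrder (fun t : ℂ => (h t).re + f t) = ⊤) := by
  obtain ⟨f, hf, ha⟩ := exists_contDiff_hasReTaylorSeries fun n => (n * n ! : ℂ)
  refine ⟨f, hf, by simp [ha.apply_zero], ha.isInfiniteType hf (by simp), ?_⟩
  rintro ⟨h, ε, hε, hh, -, htop⟩
  have hh₀ : AnalyticAt ℂ h 0 := hh.analyticAt (Metric.ball_mem_nhds 0 hε)
  exact (ha.radius_pos_of_vanishOrder_eq_top hf hh₀ htop).ne'
    (radius_ofScalars_natCast_mul_factorial ℂ)
end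

section
/- Let P be a C^∞-smooth real-valued function on a disc {|z| < ε₀} in ℂ with P(0)=0, P(z) > 0 for all z ≠ 0, and P vanishing to infinite order at 0. Let Δ*_{ε₀} = {z ∈ ℂ : 0 < |z| < ε₀} be the punctured disc. If γ: (0,1) → Δ*_{ε₀} is a C¹-smooth curve with lim_{t→0⁺} γ(t) = 0, then for any nonnegative integer n the function t ↦ Re[γ'(t) · P'(γ(t))/P(γ(t))^{n+1}] is unbounded on (0,1). -/
/-!
By the chain rule `2 * Re (γ' * P'(γ)) = u'` with `u = P ∘ γ`. Where `0 < u ≤ 1`, a nonnegative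
upper bound for `u' / u ^ r` with `1 ≤ r` is also one for `(log u)' = u' / u`. But `log u → -∞` as
`t → 0⁺`, so by the mean value inequality `(log u)'` is not bounded above near `0`.
-/

open Complex Metric Filter Topology Asymptotics

lemma fderiv_ofReal_comp_apply {E : Type*} [NormedAddCommGroup E] [NormedSpace ℝ E] {f : E → ℝ}
    {x : E} (hf : DifferentiableAt ℝ f x) (v : E) :
    fderiv ℝ (fun y => (f y : ℂ)) x v = (fderiv ℝ f x v : ℂ) :=
  DFunLike.congr_fun (ofRealCLM.hasFDerivAt.comp x hf.hasFDerivAt).fderiv v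

lemma re_mul_wirtingerR {f : ℂ → ℝ} {z : ℂ} (hf : DifferentiableAt ℝ f z) (v : ℂ) :
    (v * wirtingerR f z).re = fderiv ℝ f z v / 2 := by
  have hv : fderiv ℝ f z v = v.re * fderiv ℝ f z 1 + v.im * fderiv ℝ f z I := by
    have hbasis : v = v.re • (1 : ℂ) + v.im • I := by simp
    conv_lhs => rw [hbasis]
    simp only [map_add, map_smul, smul_eq_mul]
  have hw : wirtingerR f z = (⟨fderiv ℝ f z 1 / 2, -(fderiv ℝ f z I / 2)⟩ : ℂ) := by
    rw [wirtingerR, wirtinger, fderiv_ofReal_comp_apply hf, fderiv_ofReal_comp_apply hf]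
    apply Complex.ext <;> simp <;> ring
  rw [hw, hv, mul_re]
  ring

lemma re_deriv_mul_wirtingerR {f : ℂ → ℝ} {γ : ℝ → ℂ} {t : ℝ}
    (hf : DifferentiableAt ℝ f (γ t)) (hγ : DifferentiableAt ℝ γ t) :
    (deriv γ t * wirtingerR f (γ t)).re = deriv (f ∘ γ) t / 2 := by
  rw [re_mul_wirtingerR hf, fderiv_comp_deriv t hf hγ]

lemma not_isBoundedUnder_le_deriv_of_tendsto_atBot {f : ℝ → ℝ} {a : ℝ}
    (hf : ∀ᶠ t in 𝓝[>] a, DifferentiableAt ℝ f t) (hlim : Tendsto f (𝓝[>] a) atBot) :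
    ¬ IsBoundedUnder (· ≤ ·) (𝓝[>] a) (deriv f) := by
  rintro ⟨C, hC⟩
  obtain ⟨b, hab : a < b, hb⟩ :=
    mem_nhdsGT_iff_exists_Ioo_subset.1 (hf.and (eventually_map.1 hC))
  have hdiff : DifferentiableOn ℝ f (Set.Ioo a b) := fun t ht =>
    (hb ht).1.differentiableWithinAt
  obtain ⟨c, hc⟩ : (Set.Ioo a b).Nonempty := Set.nonempty_Ioo.2 hab
  have hmean : ∀ t ∈ Set.Ioo a c, f c - C * (c - t) ≤ f t := fun t ht => by
    have h := (convex_Ioo a b).image_sub_le_mul_sub_of_deriv_le hdiff.continuousOn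
      (hdiff.mono interior_subset) (fun s hs => (hb (interior_subset hs)).2)
      t ⟨ht.1, ht.2.trans hc.2⟩ c hc ht.2.le
    linarith
  have hlower : Tendsto (fun t => f c - C * (c - t)) (𝓝[>] a) (𝓝 (f c - C * (c - a))) :=
    (Continuous.tendsto (by fun_prop) a).mono_left nhdsWithin_le_nhds
  have hbot : Tendsto (fun t => f c - C * (c - t)) (𝓝[>] a) atBot :=
    tendsto_atBot_mono' _ (eventually_of_mem (Ioo_mem_nhdsGT hc.1) hmean) hlim
  exact not_tendsto_nhds_of_tendsto_atBot hbot _ hlower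

lemma not_isBoundedUnder_le_deriv_div_rpow {u : ℝ → ℝ} {a r : ℝ} (hr : 1 ≤ r)
    (hu : ∀ᶠ t in 𝓝[>] a, DifferentiableAt ℝ u t) (hpos : ∀ᶠ t in 𝓝[>] a, 0 < u t)
    (hlim : Tendsto u (𝓝[>] a) (𝓝 0)) :
    ¬ IsBoundedUnder (· ≤ ·) (𝓝[>] a) (fun t => deriv u t / u t ^ r) := by
  rintro ⟨C, hC⟩
  have hlog : Tendsto (fun t => Real.log (u t)) (𝓝[>] a) atBot :=
    Real.tendsto_log_nhdsGT_zero.comp (tendsto_nhdsWithin_iff.2 ⟨hlim, hpos⟩)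
  have hlogdiff : ∀ᶠ t in 𝓝[>] a, DifferentiableAt ℝ (fun s => Real.log (u s)) t := by
    filter_upwards [hu, hpos] with t htu ht0 using htu.log ht0.ne'
  refine not_isBoundedUnder_le_deriv_of_tendsto_atBot hlogdiff hlog ⟨max C 0, eventually_map.2 ?_⟩
  filter_upwards [hu, hpos, hlim.eventually_le_const one_pos, eventually_map.1 hC]
    with t htu ht0 ht1 htC
  calc deriv (fun s => Real.log (u s)) t
      = deriv u t / u t := deriv.log htu ht0.ne'
    _ = deriv u t / u t ^ r * u t ^ (r - 1) := by
      rw [Real.rpow_sub_one ht0.ne']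
      field_simp
    _ ≤ max C 0 * u t ^ (r - 1) := by
      gcongr
      exact htC.trans (le_max_left C 0)
    _ ≤ max C 0 :=
      mul_le_of_le_one_right (le_max_right C 0)
        (Real.rpow_le_one ht0.le ht1 (sub_nonneg.2 hr))

theorem statement6_general {U : Set ℂ} (hU : IsOpen U) {P : ℂ → ℝ} (hP : DifferentiableOn ℝ P U)
    (hPpos : ∀ z ∈ U, 0 < P z) {z₀ : ℂ} (hPcont : ContinuousAt P z₀) (hPz₀ : P z₀ = 0)
    {γ : ℝ → ℂ} {a b : ℝ} (hab : a < b) (hγ : DifferentiableOn ℝ γ (Set.Ioo a b))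
    (hγU : Set.MapsTo γ (Set.Ioo a b) U) (hγlim : Tendsto γ (𝓝[>] a) (𝓝 z₀))
    {r : ℝ} (hr : 1 ≤ r) :
    ¬ IsBoundedUnder (· ≤ ·) (𝓝[>] a)
      (fun t => (deriv γ t * wirtingerR P (γ t) / (P (γ t) ^ r : ℝ)).re) := by
  rintro ⟨C, hC⟩
  have hmem : ∀ᶠ t in 𝓝[>] a, t ∈ Set.Ioo a b := Ioo_mem_nhdsGT hab
  have hPγ : ∀ t ∈ Set.Ioo a b, DifferentiableAt ℝ P (γ t) := fun t ht =>
    hP.differentiableAt (hU.mem_nhds (hγU ht))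
  have hγt : ∀ t ∈ Set.Ioo a b, DifferentiableAt ℝ γ t := fun t ht =>
    hγ.differentiableAt (isOpen_Ioo.mem_nhds ht)
  refine not_isBoundedUnder_le_deriv_div_rpow (u := P ∘ γ) hr
    (hmem.mono fun t ht => (hPγ t ht).comp t (hγt t ht))
    (hmem.mono fun t ht => hPpos _ (hγU ht)) (hPz₀ ▸ hPcont.tendsto.comp hγlim)
    ⟨2 * C, eventually_map.2 ?_⟩
  filter_upwards [hmem, eventually_map.1 hC] with t ht htC
  rw [div_ofReal_re, re_deriv_mul_wirtingerR (hPγ t ht) (hγt t ht), div_right_comm] at htC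
  exact (div_le_iff₀' two_pos).1 htC

/-- **Lemma 2 (Kim–Ninh).** Let P be a C^∞ real-valued function on the disc {|z| < ε₀} with
P(0)=0, P > 0 off 0, vanishing to infinite order at 0. If γ : (0,1) → Δ*_{ε₀} is a C¹ curve
into the punctured disc with γ(t) → 0 as t → 0⁺, then for any nonnegative integer n the
function t ↦ Re[γ'(t) P'(γ(t))/P(γ(t))^{n+1}] is unbounded on (0,1). -/
theorem statement6 (ε₀ : ℝ) (hε₀ : 0 < ε₀) (P : ℂ → ℝ)
    (hPsm : ContDiffOn ℝ (⊤ : ℕ∞) P (Metric.ball 0 ε₀))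
    (hP0 : P 0 = 0)
    (hPpos : ∀ z ∈ Metric.ball (0 : ℂ) ε₀, z ≠ 0 → 0 < P z)
    (hPflat : ∀ n : ℕ, iteratedFDeriv ℝ n P 0 = 0)
    (γ : ℝ → ℂ) (hγ : ContDiffOn ℝ 1 γ (Set.Ioo 0 1))
    (hγmem : ∀ t ∈ Set.Ioo (0 : ℝ) 1, γ t ∈ Metric.ball (0 : ℂ) ε₀ ∧ γ t ≠ 0)
    (hγlim : Filter.Tendsto γ (𝓝[>] (0 : ℝ)) (𝓝 0))
    (n : ℕ) :
    ¬ (∃ C : ℝ, ∀ t ∈ Set.Ioo (0 : ℝ) 1,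
        |(deriv γ t * wirtingerR P (γ t) / (P (γ t) : ℂ) ^ (n + 1)).re| ≤ C) := by
  rintro ⟨C, hC⟩
  have hPdiff : DifferentiableOn ℝ P (ball 0 ε₀) := hPsm.differentiableOn (by simp)
  refine statement6_general (isOpen_ball.sdiff isClosed_singleton) (hPdiff.mono Set.sdiff_subset)
    (fun z hz => hPpos z hz.1 hz.2) (hPdiff.continuousOn.continuousAt (ball_mem_nhds 0 hε₀)) hP0
    one_pos (hγ.differentiableOn one_ne_zero) hγmem hγlim
    (r := (n + 1 : ℕ)) (by simp) ⟨C, eventually_map.2 ?_⟩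
  filter_upwards [Ioo_mem_nhdsGT one_pos] with t ht
  simpa only [Real.rpow_natCast, ofReal_pow] using le_of_abs_le (hC t ht)
end
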